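/- arXiv:math/0407326 — 5 statements merged into one kernel-verified Lean document; each statement's English description precedes it below -/
import Mathlib

section
/- The Motzkin prefix number P_n is even if and only if there exists m ∈ C with n = 2m − 1. -/
/-- `motzkinPrefix n` is the number of sequences `(s 0, …, s (n-1))` with entries in
`{-1, 0, 1}` (encoded as `Fin 3`, via `i ↦ (i : ℤ) - 1`) all of whose partial sums
are nonnegative, i.e. the number of Motzkin prefixes of length `n`. -/
def motzkinPrefix (n : ℕ) : ℕ :=
  ((Finset.univ : Finset (Fin n → Fin 3)).filter fun s =>
    ∀ j : Fin n, 0 ≤ ∑ i ∈ Finset.univ.filter (· ≤ j), ((s i : ℤ) - 1)).card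

/-- The set `C = {1, 3, 4, 5, 7, 9, 11, 12, …}` of block lengths of the Thue–Morse
sequence: a positive integer `m` belongs to `C` iff it is not the case that `m` is
even with `m / 2 ∈ C`;  `0 ∉ C`. -/
def inC (m : ℕ) : Bool :=
  if h : m = 0 then false
  else if m % 2 = 0 then !(inC (m / 2)) else true
decreasing_by exact Nat.div_lt_self (Nat.pos_of_ne_zero h) one_lt_two

/-!
Counting nonnegative Motzkin walks from a height `h` is a linear recursion killed at height `-1`.
By the reflection principle the boundary may be dropped if the initial condition is made odd about
`-1`: the number of walks is the `n`-th iterate of `f ↦ f (h - 1) + f h + f (h + 1)` on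
`h ↦ sign (h + 1)`. Modulo 2 the square of this operator is the same operator with step `2`
(Frobenius), which preserves the parity of heights. On even heights the initial condition is
constantly `1`, and on odd heights `2 * j + 1` it is `sign (j + 1)` again. Hence `P (2 * k)` is odd
and `P (2 * k + 1)` has the parity of `1 + P k`, which is the recursion defining `C`.
-/

section MotzkinStep

variable {G H M N : Type*} [AddCommGroup G] [AddCommGroup H]

/-- The transfer operator of Motzkin walks with steps `-d`, `0` and `d`: if `f` gives the weight of
each end point, then `(motzkinStep d)^[n] f x` is the total weight of the unrestricted walks of
length `n` starting at `x`. -/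
def motzkinStep [Add M] (d : G) (f : G → M) (x : G) : M :=
  f (x - d) + f x + f (x + d)

theorem motzkinStep_comp_affine [Add M] (φ : G →+ H) (r : H) (d : G) (f : H → M) :
    motzkinStep d (fun x => f (φ x + r)) = fun x => motzkinStep (φ d) f (φ x + r) := by
  funext x
  simp only [motzkinStep, map_sub, map_add, sub_add_eq_add_sub, add_right_comm]

theorem iterate_motzkinStep_affine [Add M] (φ : G →+ H) (r : H) (d : G) (f : H → M) (n : ℕ)
    (x : G) :
    (motzkinStep (φ d))^[n] f (φ x + r) = (motzkinStep d)^[n] (fun y => f (φ y + r)) x := by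
  have semiconj : Function.Semiconj (fun (g : H → M) y => g (φ y + r))
      (motzkinStep (φ d)) (motzkinStep d) :=
    fun g => (motzkinStep_comp_affine φ r d g).symm
  exact congrFun (semiconj.iterate_right n f) x

theorem map_iterate_motzkinStep [AddZeroClass M] [AddZeroClass N] (φ : M →+ N) (d : G) (f : G → M)
    (n : ℕ) (x : G) :
    φ ((motzkinStep d)^[n] f x) = (motzkinStep d)^[n] (φ ∘ f) x := by
  have semiconj : Function.Semiconj (φ ∘ ·) (motzkinStep (M := M) d) (motzkinStep d) := by
    intro g
    funext y
    simp only [motzkinStep, Function.comp_apply, map_add]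
  exact congrFun (semiconj.iterate_right n f) x

theorem iterate_motzkinStep_reflect [AddCommGroup M] (d a : G) {f : G → M}
    (hf : ∀ x, f (a - x) = -f x) (n : ℕ) (x : G) :
    (motzkinStep d)^[n] f (a - x) = -(motzkinStep d)^[n] f x := by
  induction n generalizing x with
  | zero => exact hf x
  | succ n ih =>
    simp only [Function.iterate_succ_apply', motzkinStep]
    rw [sub_sub, sub_add, ih, ih, ih]
    abel

section CharTwo

variable {R : Type*} [Semiring R] [CharP R 2]

theorem motzkinStep_motzkinStep (d : G) (f : G → R) :
    motzkinStep d (motzkinStep d f) = motzkinStep (2 • d) f := by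
  funext x
  have cross_terms : motzkinStep d (motzkinStep d f) x = motzkinStep (2 • d) f x +
      ((f (x - d) + f (x - d)) + (f x + f x) + (f (x + d) + f (x + d))) := by
    simp only [motzkinStep, sub_add_cancel, add_sub_cancel_right, sub_sub, add_assoc x, two_nsmul]
    abel
  simpa only [CharTwo.add_self_eq_zero, add_zero] using cross_terms

theorem iterate_motzkinStep_two_mul (d : G) (f : G → R) (n : ℕ) :
    (motzkinStep d)^[2 * n] f = (motzkinStep (2 • d))^[n] f := by
  have sq : (motzkinStep d)^[2] = motzkinStep (M := R) (2 • d) :=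
    funext (motzkinStep_motzkinStep d)
  rw [Function.iterate_mul, sq]

theorem iterate_motzkinStep_const (d : G) (c : R) (n : ℕ) :
    (motzkinStep d)^[n] (fun _ => c) = fun _ => c := by
  refine Function.iterate_fixed (funext fun _ => ?_) n
  rw [motzkinStep, CharTwo.add_self_eq_zero, zero_add]

theorem iterate_motzkinStep_two_mul_affine (f : ℤ → R) (k : ℕ) (j r : ℤ) :
    (motzkinStep 1)^[2 * k] f (2 * j + r) =
      (motzkinStep 1)^[k] (fun i => f (2 * i + r)) j := by
  rw [iterate_motzkinStep_two_mul]
  exact iterate_motzkinStep_affine (AddMonoidHom.mulLeft 2) r 1 f k j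

end CharTwo

end MotzkinStep

section ReflectedCount

/-- The number of Motzkin walks of length `n` starting at height `h ≥ 0` and staying nonnegative
(see `natCast_card_staysNonneg`), extended to all `h` as a function odd about `-1`. -/
def reflectedCount (n : ℕ) : ℤ → ℤ :=
  (motzkinStep 1)^[n] fun h => (h + 1).sign

theorem reflectedCount_zero (h : ℤ) : reflectedCount 0 h = (h + 1).sign := rfl

theorem reflectedCount_succ (n : ℕ) (h : ℤ) :
    reflectedCount (n + 1) h =
      reflectedCount n (h - 1) + reflectedCount n h + reflectedCount n (h + 1) := by
  simp only [reflectedCount, Function.iterate_succ_apply', motzkinStep]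

theorem reflectedCount_neg_two_sub (n : ℕ) (h : ℤ) :
    reflectedCount n (-2 - h) = -reflectedCount n h := by
  refine iterate_motzkinStep_reflect 1 (-2) (fun i => ?_) n h
  rw [← Int.sign_neg]
  congr 1
  ring

theorem reflectedCount_neg_one (n : ℕ) : reflectedCount n (-1) = 0 := by
  have odd_at_center := reflectedCount_neg_two_sub n (-1)
  rw [show (-2 : ℤ) - -1 = -1 by norm_num] at odd_at_center
  exact self_eq_neg.1 odd_at_center

variable {R : Type*} [Ring R]

theorem intCast_reflectedCount (n : ℕ) (h : ℤ) :
    (reflectedCount n h : R) = (motzkinStep 1)^[n] (fun i => ((i + 1).sign : R)) h :=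
  map_iterate_motzkinStep (Int.castAddHom R) 1 _ n h

theorem intCast_reflectedCount_two_mul_even [CharP R 2] (k : ℕ) (j : ℤ) :
    (reflectedCount (2 * k) (2 * j) : R) = 1 := by
  have sign_odd (i : ℤ) : ((2 * i + 0 + 1).sign : R) = 1 := by
    rcases lt_or_gt_of_ne (show 2 * i + 0 + 1 ≠ 0 by omega) with hneg | hpos
    · rw [Int.sign_eq_neg_one_of_neg hneg, Int.cast_neg, Int.cast_one, CharTwo.neg_eq]
    · rw [Int.sign_eq_one_of_pos hpos, Int.cast_one]
  rw [← add_zero (2 * j), intCast_reflectedCount, iterate_motzkinStep_two_mul_affine]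
  simp only [sign_odd, iterate_motzkinStep_const]

theorem intCast_reflectedCount_two_mul_odd [CharP R 2] (k : ℕ) (j : ℤ) :
    (reflectedCount (2 * k) (2 * j + 1) : R) = reflectedCount k j := by
  have sign_even (i : ℤ) : (2 * i + 1 + 1).sign = (i + 1).sign := by
    rw [show 2 * i + 1 + 1 = 2 * (i + 1) by ring, Int.sign_mul, Int.sign_eq_one_of_pos two_pos,
      one_mul]
  simp only [intCast_reflectedCount, iterate_motzkinStep_two_mul_affine, sign_even]

end ReflectedCount

section StaysNonneg

/-- All heights after the start of the walk with initial height `h` and steps `s` are nonnegative;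
the initial height itself is not constrained. -/
def StaysNonneg {α : Type*} [AddCommMonoid α] [LE α] {n : ℕ} (h : α) (s : Fin n → α) : Prop :=
  ∀ j, 0 ≤ h + ∑ i with i ≤ j, s i

instance {α : Type*} [AddCommMonoid α] [LE α] [DecidableLE α] {n : ℕ} (h : α) (s : Fin n → α) :
    Decidable (StaysNonneg h s) :=
  inferInstanceAs (Decidable (∀ _, _))

theorem staysNonneg_succ {α : Type*} [AddCommMonoid α] [LE α] {n : ℕ} (h : α)
    (s : Fin (n + 1) → α) :
    StaysNonneg h s ↔ 0 ≤ h + s 0 ∧ StaysNonneg (h + s 0) fun i => s i.succ := by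
  simp only [StaysNonneg, Fin.forall_fin_succ, Finset.sum_filter, Fin.sum_univ_succ, Fin.zero_le,
    Fin.succ_le_succ_iff, if_true, ← add_assoc]
  simp

theorem card_staysNonneg_succ {α ι : Type*} [AddCommMonoid α] [LE α] [DecidableLE α] [Fintype ι]
    (step : ι → α) (n : ℕ) (h : α) :
    Finset.card {s : Fin (n + 1) → ι | StaysNonneg h fun i => step (s i)} =
      ∑ a, if 0 ≤ h + step a then
        Finset.card {s : Fin n → ι | StaysNonneg (h + step a) fun i => step (s i)} else 0 := by
  simp only [Finset.card_filter]
  rw [← (Fin.consEquiv fun _ : Fin (n + 1) => ι).sum_comp, Fintype.sum_prod_type]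
  refine Finset.sum_congr rfl fun a _ => ?_
  simp only [Fin.consEquiv_apply, staysNonneg_succ, Fin.cons_zero, Fin.cons_succ, ite_and]
  split_ifs <;> simp

theorem natCast_card_staysNonneg (n : ℕ) {h : ℤ} (hh : 0 ≤ h) :
    (Finset.card {s : Fin n → Fin 3 | StaysNonneg h fun i => (s i : ℤ) - 1} : ℤ) =
      reflectedCount n h := by
  induction n generalizing h with
  | zero =>
    rw [reflectedCount_zero, Int.sign_eq_one_of_pos (by omega)]
    simp [StaysNonneg]
  | succ n ih =>
    rw [card_staysNonneg_succ fun a : Fin 3 => (a : ℤ) - 1, reflectedCount_succ,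
      Fin.sum_univ_three]
    have down : h + (((0 : Fin 3) : ℤ) - 1) = h - 1 := rfl
    have level : h + (((1 : Fin 3) : ℤ) - 1) = h := add_zero h
    have up : h + (((2 : Fin 3) : ℤ) - 1) = h + 1 := rfl
    have hup : 0 ≤ h + 1 := by omega
    simp only [down, level, up, if_pos hh, if_pos hup, Nat.cast_add, ih hh, ih hup]
    congr 2
    split_ifs with hdown
    · exact ih hdown
    · obtain rfl : h = 0 := by omega
      exact (reflectedCount_neg_one n).symm

end StaysNonneg

theorem motzkinPrefix_eq_reflectedCount (n : ℕ) : (motzkinPrefix n : ℤ) = reflectedCount n 0 := by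
  simp only [← natCast_card_staysNonneg n le_rfl, motzkinPrefix, StaysNonneg, zero_add]

theorem odd_motzkinPrefix_two_mul (k : ℕ) : Odd (motzkinPrefix (2 * k)) := by
  rw [← ZMod.natCast_eq_one_iff_odd, ← Int.cast_natCast, motzkinPrefix_eq_reflectedCount]
  exact intCast_reflectedCount_two_mul_even k 0

theorem natCast_motzkinPrefix_two_mul_add_one (k : ℕ) :
    (motzkinPrefix (2 * k + 1) : ZMod 2) = motzkinPrefix k + 1 := by
  have even_height : (reflectedCount (2 * k) 0 : ZMod 2) = 1 :=
    intCast_reflectedCount_two_mul_even k 0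
  have odd_height : (reflectedCount (2 * k) 1 : ZMod 2) = reflectedCount k 0 :=
    intCast_reflectedCount_two_mul_odd k 0
  rw [← Int.cast_natCast, ← Int.cast_natCast (motzkinPrefix k), motzkinPrefix_eq_reflectedCount,
    motzkinPrefix_eq_reflectedCount, reflectedCount_succ, zero_sub, zero_add,
    reflectedCount_neg_one, zero_add, Int.cast_add, even_height, odd_height, add_comm]

theorem even_motzkinPrefix_two_mul_add_one (k : ℕ) :
    Even (motzkinPrefix (2 * k + 1)) ↔ Odd (motzkinPrefix k) := by
  rw [← ZMod.natCast_eq_zero_iff_even, natCast_motzkinPrefix_two_mul_add_one, ← Nat.cast_succ,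
    ZMod.natCast_eq_zero_iff_even, Nat.even_add_one, Nat.not_even_iff_odd]

theorem inC_zero : inC 0 = false := by
  simp [inC]

theorem inC_two_mul_add_one (m : ℕ) : inC (2 * m + 1) = true := by
  rw [inC, dif_neg (by omega), if_neg (by omega)]

theorem inC_two_mul {m : ℕ} (hm : m ≠ 0) : inC (2 * m) = !inC m := by
  rw [inC, dif_neg (by omega), if_pos (by omega), Nat.mul_div_cancel_left m two_pos]

theorem inC_succ_iff (k : ℕ) : inC (k + 1) ↔ Even (motzkinPrefix (2 * k + 1)) := by
  induction k using Nat.strong_induction_on with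
  | _ k ih =>
    rw [even_motzkinPrefix_two_mul_add_one]
    obtain ⟨j, rfl | rfl⟩ := k.even_or_odd'
    · simp only [inC_two_mul_add_one, odd_motzkinPrefix_two_mul]
    · rw [show 2 * j + 1 + 1 = 2 * (j + 1) by ring, inC_two_mul j.succ_ne_zero,
        Bool.not_eq_true', ← Bool.not_eq_true, ih j (by omega), Nat.not_even_iff_odd]

/-- The Motzkin prefix number `P n` is even iff `n = 2m - 1` for some `m ∈ C`. -/
theorem motzkinPrefix_even_iff (n : ℕ) :
    Even (motzkinPrefix n) ↔ ∃ m : ℕ, inC m ∧ n = 2 * m - 1 := by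
  constructor
  · intro heven
    obtain ⟨k, rfl | rfl⟩ := n.even_or_odd'
    · exact absurd heven (Nat.not_even_iff_odd.2 (odd_motzkinPrefix_two_mul k))
    · exact ⟨k + 1, (inC_succ_iff k).2 heven, by omega⟩
  · rintro ⟨_ | k, hm, rfl⟩
    · simp [inC_zero] at hm
    · exact (inC_succ_iff k).1 hm
end

section
/- Let p be a prime. If every base-p digit d of n satisfies 2d ≤ p, then binomial(2n, n) ≡ ∏_{j=0}^{p−1} binomial(2j, j)^{δ_{p,j}(n)} (mod p), where δ_{p,j}(n) is the number of base-p digits of n equal to j. If some base-p digit d of n satisfies 2d > p, then binomial(2n, n) ≡ 0 (mod p). -/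
/-!
If the units digit `d = n % p` has `p ≤ 2 * d`, doubling `n` in base `p` produces a carry, so
`2 * n / p` is not `2 * (n / p)` and Lucas' theorem does not split `(2 * n).choose n` into central
binomial coefficients. But then the units digit `2 * d - p` of `2 * n` is smaller than `d`, so both
sides of `(2 * n).choose n ≡ (2 * d).choose d * (2 * (n / p)).choose (n / p) [MOD p]` vanish.
Modulo `p`, the central binomial coefficient is therefore the product of its values at the digits,
with or without carries, and a factor with `p ≤ 2 * d` is divisible by `p`.
-/

section Digits

variable {M : Type*} {b : ℕ}

lemma eq_prod_map_digits [Monoid M] {f : ℕ → M} (hb : 1 < b) (map_zero : f 0 = 1)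
    (map_eq : ∀ n, f n = f (n % b) * f (n / b)) (n : ℕ) :
    f n = ((Nat.digits b n).map f).prod := by
  induction n using Nat.strong_induction_on with
  | _ n ih =>
    rcases Nat.eq_zero_or_pos n with rfl | hn
    · simp [map_zero]
    · rw [Nat.digits_def' hb hn, List.map_cons, List.prod_cons,
        ← ih _ (Nat.div_lt_self hn hb), ← map_eq]

lemma prod_map_digits_eq_prod_range_pow_count [CommMonoid M] (hb : 1 < b) (f : ℕ → M) (n : ℕ) :
    ((Nat.digits b n).map f).prod = ∏ j ∈ Finset.range b, f j ^ (Nat.digits b n).count j := by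
  rw [Finset.prod_list_map_count]
  refine Finset.prod_subset (fun d hd ↦ ?_) fun j _ hj ↦ ?_
  · exact Finset.mem_range.2 (Nat.digits_lt_base hb (List.mem_toFinset.1 hd))
  · rw [List.count_eq_zero_of_not_mem (mt List.mem_toFinset.2 hj), pow_zero]

end Digits

section CentralBinom

variable {p : ℕ}

lemma choose_add_mul_add_mul_modEq (hp : p.Prime) {a c : ℕ} (hc : c < p) (ha : a < p + c)
    (b d : ℕ) :
    (a + p * b).choose (c + p * d) ≡ a.choose c * b.choose d [MOD p] := by
  have : Fact p.Prime := ⟨hp⟩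
  have lucas_left : (a + p * b).choose (c + p * d) ≡
      (a % p).choose c * (a / p + b).choose d [MOD p] := by
    simpa [Nat.add_mul_div_left _ _ hp.pos, Nat.mod_eq_of_lt hc, Nat.div_eq_of_lt hc] using
      Choose.choose_modEq_choose_mod_mul_choose_div_nat (p := p) (n := a + p * b) (k := c + p * d)
  have lucas_right : a.choose c ≡ (a % p).choose c [MOD p] := by
    simpa [Nat.mod_eq_of_lt hc, Nat.div_eq_of_lt hc] using
      Choose.choose_modEq_choose_mod_mul_choose_div_nat (p := p) (n := a) (k := c)
  refine lucas_left.trans (Nat.ModEq.trans ?_ (lucas_right.symm.mul_right _))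
  rcases lt_or_ge a p with hap | hpa
  · rw [Nat.div_eq_of_lt hap, zero_add]
  · have units_lt : a % p < c := by
      rw [Nat.mod_eq_sub_mod hpa]
      exact (Nat.mod_le _ _).trans_lt (by lia)
    rw [Nat.choose_eq_zero_of_lt units_lt, zero_mul, zero_mul]

lemma centralBinom_modEq_centralBinom_mod_mul_centralBinom_div (hp : p.Prime) (n : ℕ) :
    n.centralBinom ≡ (n % p).centralBinom * (n / p).centralBinom [MOD p] := by
  have hlt : n % p < p := Nat.mod_lt n hp.pos
  have two_mul_eq : 2 * (n % p) + p * (2 * (n / p)) = 2 * n := by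
    rw [mul_left_comm, ← mul_add, Nat.mod_add_div]
  simpa only [Nat.centralBinom_eq_two_mul_choose, two_mul_eq, Nat.mod_add_div] using
    choose_add_mul_add_mul_modEq hp hlt (by lia : 2 * (n % p) < p + n % p) (2 * (n / p)) (n / p)

lemma centralBinom_modEq_prod_map_digits (hp : p.Prime) (n : ℕ) :
    n.centralBinom ≡ ((Nat.digits p n).map Nat.centralBinom).prod [MOD p] := by
  rw [← ZMod.natCast_eq_natCast_iff, Nat.cast_list_prod, List.map_map]
  refine eq_prod_map_digits (f := fun n ↦ (n.centralBinom : ZMod p)) hp.one_lt (by simp)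
    (fun n ↦ ?_) n
  exact_mod_cast (ZMod.natCast_eq_natCast_iff _ _ p).2
    (centralBinom_modEq_centralBinom_mod_mul_centralBinom_div hp n)

lemma dvd_centralBinom_of_lt_of_le_two_mul (hp : p.Prime) {d : ℕ} (hdp : d < p)
    (hpd : p ≤ 2 * d) : p ∣ d.centralBinom :=
  hp.dvd_choose hdp (by lia) hpd

theorem centralBinom_mod_prime_general (hp : p.Prime) (n : ℕ) :
    n.centralBinom ≡
        ∏ j ∈ Finset.range p, j.centralBinom ^ (Nat.digits p n).count j [MOD p] ∧
      ((∃ d ∈ Nat.digits p n, p ≤ 2 * d) → n.centralBinom ≡ 0 [MOD p]) := by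
  have digit_prod := centralBinom_modEq_prod_map_digits hp n
  refine ⟨?_, ?_⟩
  · rwa [← prod_map_digits_eq_prod_range_pow_count hp.one_lt]
  · rintro ⟨d, hd, hpd⟩
    have p_dvd_factor : p ∣ d.centralBinom :=
      dvd_centralBinom_of_lt_of_le_two_mul hp (Nat.digits_lt_base hp.one_lt hd) hpd
    have factor_dvd_prod : d.centralBinom ∣ ((Nat.digits p n).map Nat.centralBinom).prod :=
      List.dvd_prod (List.mem_map_of_mem hd)
    exact digit_prod.trans (Nat.modEq_zero_iff_dvd.2 (p_dvd_factor.trans factor_dvd_prod))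

end CentralBinom

/-- Central binomial coefficients modulo a prime `p`:  if every base-`p` digit `d` of
`n` satisfies `2d ≤ p`, then `C(2n, n) ≡ ∏_j C(2j, j)^{δ_{p,j}(n)} (mod p)`, where
`δ_{p,j}(n)` is the number of base-`p` digits of `n` equal to `j`; if some base-`p`
digit `d` of `n` satisfies `2d > p`, then `C(2n, n) ≡ 0 (mod p)`. -/
theorem centralBinom_mod_prime (p : ℕ) (hp : p.Prime) (n : ℕ) :
    ((∀ d ∈ Nat.digits p n, 2 * d ≤ p) →
      (2 * n).choose n ≡
        ∏ j ∈ Finset.range p, ((2 * j).choose j) ^ ((Nat.digits p n).count j) [MOD p]) ∧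
    ((∃ d ∈ Nat.digits p n, p < 2 * d) → (2 * n).choose n ≡ 0 [MOD p]) := by
  simp only [← Nat.centralBinom_eq_two_mul_choose]
  obtain ⟨modEq_prod, modEq_zero⟩ := centralBinom_mod_prime_general hp n
  exact ⟨fun _ ↦ modEq_prod, fun ⟨d, hd, hlt⟩ ↦ modEq_zero ⟨d, hd, hlt.le⟩⟩
end

section
/- Let B = {n ∈ ℕ : binomial(2n, n) ≡ 2 (mod 3)}, which is an infinite set, and let b_0 < b_1 < b_2 < ... be its elements in increasing order. Then for every i ∈ ℕ, b_i ≡ 1 − t_i (mod 3), where t is the Thue–Morse sequence; that is, b_i ≡ 1 (mod 3) when t_i = 0 and b_i ≡ 0 (mod 3) when t_i = 1. -/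
/-- The Thue–Morse sequence: `t n` is the parity of the number of ones in the
binary expansion of `n`. -/
def thueMorse (n : ℕ) : ℕ := (Nat.digits 2 n).count 1 % 2

/-! By Lucas' theorem `C(2n, n)` is modulo a prime `p` the product of the `C(2d, d)` over the
base-`p` digits `d` of `n`. For `p = 3` a digit `2` contributes `6 ≡ 0` and a digit `1` contributes
`2 ≡ -1`, so `C(2n, n) ≡ 2` exactly when `n` is obtained by reading in base `3` the binary digits of
some `m` with an odd number of ones. Reading in base `3` preserves the order as well as the last
digit. Exactly one of `2i` and `2i + 1` has an odd number of ones, namely `2i + (1 - t_i)`, so this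
is the `i`-th such `m`, and its last digit is `1 - t_i`. -/

theorem nth_eq_of_strictMono_of_range_eq {p : ℕ → Prop} {f : ℕ → ℕ} (hf : StrictMono f)
    (hrange : Set.range f = {n | p n}) : Nat.nth p = f := by
  have hinf : {n | p n}.Infinite := hrange ▸ Set.infinite_range_of_injective hf.injective
  exact ((Nat.nth_strictMono hinf).range_inj hf).1
    ((Nat.range_nth_of_infinite hinf).trans hrange.symm)

theorem digits_mul_add {b d n : ℕ} (hd : d < b) (hb : 1 < b) (h : b * n + d ≠ 0) :
    Nat.digits b (b * n + d) = d :: Nat.digits b n := by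
  rw [add_comm]
  refine Nat.digits_add b hb d n hd ?_
  by_contra! h0
  simp [h0] at h

section ReinterpretDigits

/-- The number whose base-`b` digits are the base-`c` digits of `n`; for `c = 2` and `b = 3` it
enumerates the numbers without a ternary digit `2`. -/
def reinterpretDigits (c b n : ℕ) : ℕ := Nat.ofDigits b (Nat.digits c n)

variable {b c : ℕ}

theorem reinterpretDigits_mul_add {d : ℕ} (hc : 1 < c) (hd : d < c) (n : ℕ) :
    reinterpretDigits c b (c * n + d) = b * reinterpretDigits c b n + d := by
  rcases eq_or_ne (c * n + d) 0 with h | h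
  · obtain ⟨rfl, rfl⟩ : n = 0 ∧ d = 0 := by simpa [show c ≠ 0 by omega] using h
    simp [reinterpretDigits]
  · rw [reinterpretDigits, digits_mul_add hd hc h, Nat.ofDigits_cons, add_comm,
      reinterpretDigits]

theorem reinterpretDigits_eq_div_add_mod (hc : 1 < c) (n : ℕ) :
    reinterpretDigits c b n = b * reinterpretDigits c b (n / c) + n % c := by
  rw [← reinterpretDigits_mul_add hc (Nat.mod_lt n (by omega)), Nat.div_add_mod]

theorem reinterpretDigits_strictMono (hc : 1 < c) (hcb : c ≤ b) :
    StrictMono (reinterpretDigits c b) := by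
  intro m n hmn
  induction n using Nat.strong_induction_on generalizing m with
  | _ n ih =>
    rw [reinterpretDigits_eq_div_add_mod hc m, reinterpretDigits_eq_div_add_mod hc n]
    rcases (Nat.div_le_div_right (c := c) hmn.le).eq_or_lt with hdiv | hdiv
    · have hmod : m % c < n % c := by
        rw [← Nat.div_add_mod m c, ← Nat.div_add_mod n c, hdiv] at hmn
        exact Nat.lt_of_add_lt_add_left hmn
      rw [hdiv]
      gcongr
    · have hquot := ih (n / c) (Nat.div_lt_self (by omega) hc) hdiv
      calc b * reinterpretDigits c b (m / c) + m % c
          < b * reinterpretDigits c b (m / c) + b := by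
            gcongr
            exact (Nat.mod_lt m (by omega)).trans_le hcb
        _ = b * (reinterpretDigits c b (m / c) + 1) := by ring
        _ ≤ b * reinterpretDigits c b (n / c) := by gcongr; exact hquot
        _ ≤ b * reinterpretDigits c b (n / c) + n % c := Nat.le_add_right _ _

theorem digits_reinterpretDigits (hc : 1 < c) (hcb : c ≤ b) (n : ℕ) :
    Nat.digits b (reinterpretDigits c b n) = Nat.digits c n :=
  Nat.digits_ofDigits b (hc.trans_le hcb) _
    (fun _ hd => (Nat.digits_lt_base hc hd).trans_le hcb)
    (fun h => Nat.getLast_digit_ne_zero c (Nat.digits_ne_nil_iff_ne_zero.1 h))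

theorem mem_range_reinterpretDigits (hc : 1 < c) (hcb : c ≤ b) {n : ℕ} :
    n ∈ Set.range (reinterpretDigits c b) ↔ ∀ d ∈ Nat.digits b n, d < c := by
  constructor
  · rintro ⟨m, rfl⟩ d hd
    rw [digits_reinterpretDigits hc hcb] at hd
    exact Nat.digits_lt_base hc hd
  · intro hdigits
    have hread : Nat.digits c (Nat.ofDigits c (Nat.digits b n)) = Nat.digits b n :=
      Nat.digits_ofDigits c hc _ hdigits
        (fun h => Nat.getLast_digit_ne_zero b (Nat.digits_ne_nil_iff_ne_zero.1 h))
    exact ⟨Nat.ofDigits c (Nat.digits b n), by rw [reinterpretDigits, hread, Nat.ofDigits_digits]⟩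

end ReinterpretDigits

section Odious

theorem thueMorse_lt_two (n : ℕ) : thueMorse n < 2 := Nat.mod_lt _ two_pos

theorem thueMorse_two_mul_add {d : ℕ} (hd : d < 2) (n : ℕ) :
    thueMorse (2 * n + d) = (thueMorse n + d) % 2 := by
  rcases eq_or_ne (2 * n + d) 0 with h | h
  · obtain ⟨rfl, rfl⟩ : n = 0 ∧ d = 0 := by omega
    rfl
  · rw [thueMorse, digits_mul_add hd one_lt_two h, thueMorse]
    interval_cases d <;> simp

/-- The `i`-th odious number, counting from `i = 0`: a number is odious when its binary expansion
has an odd number of ones. -/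
def nthOdious (i : ℕ) : ℕ := 2 * i + (1 - thueMorse i)

theorem nthOdious_strictMono : StrictMono nthOdious := by
  intro i j hij
  unfold nthOdious
  omega

theorem range_nthOdious : Set.range nthOdious = {m | thueMorse m = 1} := by
  ext m
  constructor
  · rintro ⟨i, rfl⟩
    have := thueMorse_lt_two i
    rw [Set.mem_ofPred_eq, nthOdious, thueMorse_two_mul_add (by omega)]
    omega
  · intro hm
    have hparity := thueMorse_two_mul_add (Nat.mod_lt m two_pos) (m / 2)
    rw [Nat.div_add_mod, hm] at hparity
    have := thueMorse_lt_two (m / 2)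
    exact ⟨m / 2, by unfold nthOdious; omega⟩

end Odious

section CentralBinom

variable {p : ℕ} [hp : Fact p.Prime]

theorem dvd_centralBinom_of_le_two_mul {d : ℕ} (hd : d < p) (hpd : p ≤ 2 * d) :
    p ∣ Nat.centralBinom d :=
  hp.out.dvd_choose hd (by omega) hpd

theorem centralBinom_mul_add_modEq {d : ℕ} (hd : d < p) (n : ℕ) :
    Nat.centralBinom (p * n + d) ≡ Nat.centralBinom d * Nat.centralBinom n [MOD p] := by
  have hlucas : Nat.centralBinom (p * n + d) ≡
      (2 * d % p).choose d * (2 * d / p + 2 * n).choose n [MOD p] := by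
    rw [Nat.centralBinom_eq_two_mul_choose, add_comm (p * n) d,
      show 2 * (d + p * n) = 2 * d + p * (2 * n) by ring]
    simpa [Nat.add_mul_div_left _ _ hp.out.pos, Nat.mod_eq_of_lt hd, Nat.div_eq_of_lt hd] using
      Choose.choose_modEq_choose_mod_mul_choose_div_nat
        (p := p) (n := 2 * d + p * (2 * n)) (k := d + p * n)
  refine hlucas.trans ?_
  rcases lt_or_ge (2 * d) p with h | h
  · rw [Nat.mod_eq_of_lt h, Nat.div_eq_of_lt h, zero_add, Nat.centralBinom, Nat.centralBinom]
  · -- Doubling the digit `d` carries, and then both sides vanish modulo `p`.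
    have hcarry : (2 * d % p).choose d = 0 := by
      apply Nat.choose_eq_zero_of_lt
      rw [Nat.mod_eq_sub_mod h, Nat.mod_eq_of_lt (by omega)]
      omega
    rw [hcarry, zero_mul]
    exact ((dvd_centralBinom_of_le_two_mul hd h).mul_right _).modEq_zero_nat.symm

theorem centralBinom_modEq_prod_digits (n : ℕ) :
    Nat.centralBinom n ≡ ((Nat.digits p n).map Nat.centralBinom).prod [MOD p] := by
  induction n using Nat.strong_induction_on with
  | _ n ih =>
    rcases Nat.eq_zero_or_pos n with rfl | hn
    · simp [Nat.ModEq.refl]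
    · rw [Nat.digits_def' hp.out.one_lt hn, List.map_cons, List.prod_cons]
      have hlast := centralBinom_mul_add_modEq (Nat.mod_lt n hp.out.pos) (n / p)
      rw [Nat.div_add_mod] at hlast
      exact hlast.trans ((ih (n / p) (Nat.div_lt_self hn hp.out.one_lt)).mul_left _)

theorem dvd_centralBinom_of_mem_digits {d n : ℕ} (hd : d ∈ Nat.digits p n) (hpd : p ≤ 2 * d) :
    p ∣ Nat.centralBinom n := by
  rw [(centralBinom_modEq_prod_digits n).dvd_iff dvd_rfl]
  exact (dvd_centralBinom_of_le_two_mul (Nat.digits_lt_base hp.out.one_lt hd) hpd).trans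
    (List.dvd_prod (List.mem_map_of_mem hd))

end CentralBinom

theorem two_pow_mod_three (k : ℕ) : 2 ^ k % 3 = 1 + k % 2 := by
  induction k with
  | zero => rfl
  | succ k ih =>
    rw [pow_succ, Nat.mul_mod, ih]
    rcases Nat.mod_two_eq_zero_or_one k <;> omega

theorem centralBinom_reinterpretDigits_mod_three (m : ℕ) :
    Nat.centralBinom (reinterpretDigits 2 3 m) % 3 = 1 + thueMorse m := by
  have hprod : ((Nat.digits 2 m).map Nat.centralBinom).prod =
      Nat.centralBinom 1 ^ (Nat.digits 2 m).count 1 := by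
    refine List.prod_map_eq_pow_single 1 Nat.centralBinom fun d hd1 hd => ?_
    obtain rfl : d = 0 := by have := Nat.digits_lt_base one_lt_two hd; omega
    exact Nat.centralBinom_zero
  have hmod := centralBinom_modEq_prod_digits (p := 3) (reinterpretDigits 2 3 m)
  rw [digits_reinterpretDigits one_lt_two (by norm_num), hprod] at hmod
  calc Nat.centralBinom (reinterpretDigits 2 3 m) % 3
      = 2 ^ (Nat.digits 2 m).count 1 % 3 := hmod
    _ = 1 + thueMorse m := two_pow_mod_three _

theorem setOf_centralBinom_mod_three_eq_two :
    {n | Nat.centralBinom n % 3 = 2} = reinterpretDigits 2 3 '' {m | thueMorse m = 1} := by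
  ext n
  constructor
  · intro (hn : Nat.centralBinom n % 3 = 2)
    have hdigits : ∀ d ∈ Nat.digits 3 n, d < 2 := by
      intro d hd
      by_contra! h
      have := dvd_centralBinom_of_mem_digits hd (by omega)
      omega
    obtain ⟨m, rfl⟩ := (mem_range_reinterpretDigits one_lt_two (by norm_num)).2 hdigits
    rw [centralBinom_reinterpretDigits_mod_three] at hn
    exact ⟨m, show thueMorse m = 1 by omega, rfl⟩
  · rintro ⟨m, hm, rfl⟩
    rw [Set.mem_ofPred_eq, centralBinom_reinterpretDigits_mod_three, hm]

/-- The set `B` of `n` with `C(2n, n) ≡ 2 (mod 3)` is infinite, and its `i`-th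
element `b_i` (in increasing order) satisfies `b_i ≡ 1 - t_i (mod 3)` where `t` is
the Thue–Morse sequence. -/
theorem nth_centralBinom_two_mod_three :
    {n : ℕ | (2 * n).choose n % 3 = 2}.Infinite ∧
    ∀ i : ℕ, Nat.nth (fun n => (2 * n).choose n % 3 = 2) i ≡ 1 - thueMorse i [MOD 3] := by
  simp only [← Nat.centralBinom_eq_two_mul_choose]
  have hmono : StrictMono (reinterpretDigits 2 3 ∘ nthOdious) :=
    (reinterpretDigits_strictMono one_lt_two (by norm_num)).comp nthOdious_strictMono
  have hrange : Set.range (reinterpretDigits 2 3 ∘ nthOdious) =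
      {n | Nat.centralBinom n % 3 = 2} := by
    rw [Set.range_comp, range_nthOdious, setOf_centralBinom_mod_three_eq_two]
  refine ⟨hrange ▸ Set.infinite_range_of_injective hmono.injective, fun i => ?_⟩
  rw [nth_eq_of_strictMono_of_range_eq hmono hrange, Function.comp_apply, nthOdious,
    reinterpretDigits_mul_add one_lt_two (by omega), Nat.ModEq, Nat.mul_add_mod]
end

section
/- For every natural number n, the Riordan number satisfies: γ_n ≡ 1 (mod 3) if n = m − 1 for some m ∈ T(01), and γ_n ≡ 0 (mod 3) otherwise. -/
/-- The Motzkin numbers `M n = ∑_k C(n, 2k) ⬝ Catalan k`. -/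
def motzkin (n : ℕ) : ℕ := ∑ k ∈ Finset.range (n + 1), n.choose (2 * k) * catalan k

/-- The Riordan numbers: `γ 0 = 1` and `γ (n+1) = M n - γ n`. -/
def riordan : ℕ → ℤ
  | 0 => 1
  | n + 1 => (motzkin n : ℤ) - riordan n

/-- `T(01)`: the natural numbers all of whose base-3 digits are `0` or `1`. -/
def T01 : Set ℕ := {n | ∀ d ∈ Nat.digits 3 n, d = 0 ∨ d = 1}

/-!
Write `M`, `R` for the generating series of the Motzkin and Riordan numbers. The binomial sum
defining `motzkin` says `M = A · c(X²A²)` with `A = 1/(1 - X)` and `c` the Catalan series, so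
`c = 1 + X c²` turns into `(1 - X) M = 1 + X² M²`. Together with `(1 + X) R = 1 + X M` this gives
`(1 + X) R = 1 + X (1 + X) R²`, and completing the square in `G = 1 + X R` yields
`(1 + X) G² = 1 + 3 X (1 + X) R`. Modulo `3`, therefore, `G = (1 + X) G³ = (1 + X) G(X³)`, i.e.
`G = ∏ (1 + X ^ 3 ^ i)`, whose coefficients are the indicator function of `T(01)`.
-/

open PowerSeries

section Substitution

variable {R S : Type*} [CommRing R] [CommRing S] [Algebra R S]

theorem coeff_mul_subst {a : S⟦X⟧} (ha : constantCoeff a = 0) (f : R⟦X⟧) (g : S⟦X⟧) (n : ℕ) :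
    coeff n (g * f.subst a) = ∑ k ∈ Finset.range (n + 1), coeff k f • coeff n (g * a ^ k) := by
  have hsubst : HasSubst a := HasSubst.of_constantCoeff_zero' ha
  obtain ⟨tail, hf⟩ : ∃ tail, f = X ^ (n + 1) * tail + (trunc (n + 1) f : R⟦X⟧) :=
    ⟨_, eq_X_pow_mul_shift_add_trunc (n + 1) f⟩
  have tail_vanishes : coeff n (g * (a ^ (n + 1) * tail.subst a)) = 0 := by
    have hdvd : X ^ (n + 1) ∣ g * (a ^ (n + 1) * tail.subst a) :=
      ((pow_dvd_pow_of_dvd (X_dvd_iff.2 ha) _).mul_right _).mul_left _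
    exact X_pow_dvd_iff.1 hdvd n n.lt_succ_self
  have subst_eq : f.subst a = a ^ (n + 1) * tail.subst a +
      ∑ k ∈ Finset.range (n + 1), coeff k f • a ^ k := by
    conv_lhs => rw [hf]
    rw [subst_add hsubst, subst_mul hsubst, subst_pow hsubst, subst_X hsubst, subst_coe hsubst,
      Polynomial.aeval_def, eval₂_trunc_eq_sum_range]
    simp only [Algebra.smul_def]
  rw [subst_eq, mul_add, map_add, tail_vanishes, zero_add, Finset.mul_sum, map_sum]
  refine Finset.sum_congr rfl fun k _ => ?_
  rw [mul_smul_comm, ← algebraMap_smul S, coeff_smul, algebraMap_smul]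

theorem coeff_mk_one_mul_X_mul_mk_one_pow (k n : ℕ) :
    coeff n (mk 1 * (X * mk 1) ^ k : S⟦X⟧) = n.choose k := by
  have : (mk 1 * (X * mk 1) ^ k : S⟦X⟧) = X ^ k * mk 1 ^ (k + 1) := by ring
  rw [this, coeff_X_pow_mul', mk_one_pow_eq_mk_choose_add]
  split_ifs with h
  · rw [coeff_mk, Nat.add_sub_cancel' h]
  · rw [Nat.choose_eq_zero_of_lt (not_le.1 h), Nat.cast_zero]

theorem coeff_mk_one_mul_subst {r : ℕ} (hr : r ≠ 0) (f : S⟦X⟧) (n : ℕ) :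
    coeff n (mk 1 * f.subst ((X * mk 1 : S⟦X⟧) ^ r)) =
      ∑ k ∈ Finset.range (n + 1), n.choose (r * k) * coeff k f := by
  rw [coeff_mul_subst (by simp [hr])]
  refine Finset.sum_congr rfl fun k _ => ?_
  rw [← pow_mul, coeff_mk_one_mul_X_mul_mk_one_pow, smul_eq_mul, mul_comm]

end Substitution

section Frobenius

theorem expand_zmod {p : ℕ} [Fact p.Prime] (f : (ZMod p)⟦X⟧) :
    f.expand p (NeZero.ne p) = f ^ p := by
  have h : (f.expand p (NeZero.ne p)).map (frobenius (ZMod p) p) = f ^ p :=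
    MvPowerSeries.map_frobenius_expand p (NeZero.ne p)
  rw [← h, ZMod.frobenius_zmod, PowerSeries.map_id, id]

theorem eq_mul_expand_of_mul_pow_eq_one {p : ℕ} [Fact p.Prime] {f u : (ZMod p)⟦X⟧}
    (h : u * f ^ (p - 1) = 1) : f = u * f.expand p (NeZero.ne p) := by
  have hp : p ≠ 0 := NeZero.ne p
  calc f = u * f ^ (p - 1) * f := by rw [h, one_mul]
    _ = u * f ^ p := by rw [mul_assoc, pow_sub_one_mul hp]
    _ = u * f.expand p hp := by rw [expand_zmod]

end Frobenius

section OneAddXMulExpand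

variable {R : Type*} [CommRing R] {p : ℕ}

theorem coeff_one_add_X_mul_expand (hp : 1 < p) (f : R⟦X⟧) (n : ℕ) :
    coeff n ((1 + X) * f.expand p (Nat.ne_zero_of_lt hp)) =
      if n % p = 0 ∨ n % p = 1 then coeff (n / p) f else 0 := by
  rcases n with _ | n
  · simp
  have not_dvd_both : ¬(p ∣ n ∧ p ∣ n + 1) := fun ⟨h, h'⟩ =>
    hp.ne' (Nat.dvd_one.1 ((Nat.dvd_add_right h).1 h'))
  have mod_eq_one_iff : (n + 1) % p = 1 ↔ p ∣ n := by
    rw [← Nat.modEq_zero_iff_dvd, ← Nat.ModEq.add_iff_right (Nat.ModEq.refl 1), Nat.ModEq,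
      Nat.zero_add, Nat.mod_eq_of_lt hp]
  rw [add_mul, one_mul, map_add, coeff_succ_X_mul, coeff_expand, coeff_expand, Nat.succ_div]
  simp only [mod_eq_one_iff, ← Nat.dvd_iff_mod_eq_zero]
  by_cases h : p ∣ n <;> by_cases h' : p ∣ n + 1 <;> simp_all

theorem coeff_of_eq_one_add_X_mul_expand (hp : 1 < p) {f : R⟦X⟧}
    (h : f = (1 + X) * f.expand p (Nat.ne_zero_of_lt hp)) (n : ℕ) :
    coeff n f = if ∀ d ∈ Nat.digits p n, d = 0 ∨ d = 1 then coeff 0 f else 0 := by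
  induction n using Nat.strong_induction_on with
  | _ n ih =>
    rcases n.eq_zero_or_pos with rfl | hn
    · simp
    · rw [h, coeff_one_add_X_mul_expand hp, ih (n / p) (Nat.div_lt_self hn hp), ← h,
        Nat.digits_def' hp hn]
      simp only [List.mem_cons, forall_eq_or_imp, ite_and]

end OneAddXMulExpand

section GeneratingSeries

/-- The generating series `∑ Mₙ Xⁿ` of the Motzkin numbers. -/
noncomputable def motzkinSeries : ℤ⟦X⟧ := mk fun n => (motzkin n : ℤ)

/-- The generating series `∑ γₙ Xⁿ` of the Riordan numbers. -/
noncomputable def riordanSeries : ℤ⟦X⟧ := mk riordan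

/-- The generating series `1 + ∑ γₙ Xⁿ⁺¹`. The shift matches the index `n + 1 ∈ T01` of the theorem,
and the constant term `1` completes the square in the quadratic equation for `riordanSeries`. -/
noncomputable def shiftedRiordanSeries : ℤ⟦X⟧ := 1 + X * riordanSeries

theorem motzkinSeries_eq_mk_one_mul_subst :
    motzkinSeries =
      mk 1 * (catalanSeries.map (Nat.castRingHom ℤ)).subst ((X * mk 1 : ℤ⟦X⟧) ^ 2) := by
  ext n
  rw [coeff_mk_one_mul_subst two_ne_zero, motzkinSeries, coeff_mk, motzkin]
  simp

theorem one_sub_X_mul_motzkinSeries :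
    (1 - X) * motzkinSeries = 1 + X ^ 2 * motzkinSeries ^ 2 := by
  set a : ℤ⟦X⟧ := (X * mk 1) ^ 2 with ha
  set c : ℤ⟦X⟧ := catalanSeries.map (Nat.castRingHom ℤ) with hc
  have hsubst : HasSubst a := HasSubst.of_constantCoeff_zero' (by simp [ha])
  have catalan_eq : c ^ 2 * X + 1 = c := by
    simpa [hc] using congrArg (PowerSeries.map (Nat.castRingHom ℤ)) catalanSeries_sq_mul_X_add_one
  have subst_eq : c.subst a ^ 2 * a + 1 = c.subst a := by
    simpa only [map_add, map_mul, map_pow, map_one, substAlgHom_X, coe_substAlgHom hsubst] using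
      congrArg (substAlgHom (R := ℤ) hsubst) catalan_eq
  have geom : (mk 1 : ℤ⟦X⟧) * (1 - X) = 1 := mk_one_mul_one_sub_eq_one ℤ
  rw [motzkinSeries_eq_mk_one_mul_subst]
  linear_combination c.subst a * geom - subst_eq

theorem one_add_X_mul_riordanSeries : (1 + X) * riordanSeries = 1 + X * motzkinSeries := by
  ext (_ | n)
  · simp [riordanSeries, riordan]
  · simp [add_mul, riordanSeries, motzkinSeries, coeff_succ_X_mul, coeff_one, riordan]

theorem one_add_X_mul_riordanSeries_eq_one_add_sq :
    (1 + X) * riordanSeries = 1 + X * (1 + X) * riordanSeries ^ 2 := by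
  have one_add_X_ne_zero : (1 + X : ℤ⟦X⟧) ≠ 0 := fun h => by
    simpa using congrArg constantCoeff h
  apply mul_left_cancel₀ one_add_X_ne_zero
  linear_combination (1 - X * (1 + X) * riordanSeries - X ^ 2 * motzkinSeries) *
    one_add_X_mul_riordanSeries + X * one_sub_X_mul_motzkinSeries

theorem one_add_X_mul_shiftedRiordanSeries_sq :
    (1 + X) * shiftedRiordanSeries ^ 2 = 1 + 3 * (X * (1 + X) * riordanSeries) := by
  rw [shiftedRiordanSeries]
  linear_combination -X * one_add_X_mul_riordanSeries_eq_one_add_sq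

theorem coeff_zero_shiftedRiordanSeries : coeff 0 shiftedRiordanSeries = 1 := by
  simp [shiftedRiordanSeries]

theorem coeff_succ_shiftedRiordanSeries (n : ℕ) :
    coeff (n + 1) shiftedRiordanSeries = riordan n := by
  simp [shiftedRiordanSeries, riordanSeries, coeff_succ_X_mul, coeff_one]

end GeneratingSeries

section ModThree

theorem one_add_X_mul_map_shiftedRiordanSeries_sq :
    (1 + X) * shiftedRiordanSeries.map (Int.castRingHom (ZMod 3)) ^ 2 = 1 := by
  have three_eq_zero : (3 : (ZMod 3)⟦X⟧) = 0 := by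
    simpa only [map_ofNat, map_zero] using congrArg C (CharP.ofNat_eq_zero (ZMod 3) 3)
  simpa [map_ofNat, three_eq_zero] using congrArg (PowerSeries.map (Int.castRingHom (ZMod 3)))
    one_add_X_mul_shiftedRiordanSeries_sq

open Classical in
theorem riordan_cast_zmod_three (n : ℕ) :
    (riordan n : ZMod 3) = if n + 1 ∈ T01 then 1 else 0 := by
  have h := coeff_of_eq_one_add_X_mul_expand (by norm_num)
    (eq_mul_expand_of_mul_pow_eq_one one_add_X_mul_map_shiftedRiordanSeries_sq) (n + 1)
  rw [coeff_map, coeff_map, coeff_succ_shiftedRiordanSeries, coeff_zero_shiftedRiordanSeries,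
    map_one, eq_intCast] at h
  rw [h]
  exact if_congr Iff.rfl rfl rfl

end ModThree

/-- Riordan numbers mod 3: `γ n ≡ 1 (mod 3)` if `n = m - 1` for some `m ∈ T(01)`,
and `γ n ≡ 0 (mod 3)` otherwise. -/
theorem riordan_mod_three (n : ℕ) :
    ((∃ m ∈ T01, n + 1 = m) → riordan n ≡ 1 [ZMOD 3]) ∧
    (¬ (∃ m ∈ T01, n + 1 = m) → riordan n ≡ 0 [ZMOD 3]) := by
  have h := riordan_cast_zmod_three n
  constructor
  · rintro ⟨_, hm, rfl⟩
    rw [if_pos hm] at h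
    exact (ZMod.intCast_eq_intCast_iff _ _ 3).1 (by rw [h, Int.cast_one])
  · intro hm
    rw [if_neg fun hdigits => hm ⟨_, hdigits, rfl⟩] at h
    exact (ZMod.intCast_eq_intCast_iff _ _ 3).1 (by rw [h, Int.cast_zero])
end

section
/- Let p be a prime and n a natural number. Then binomial(n, k) is not divisible by p for every k with 0 ≤ k ≤ n if and only if n = q · p^k − 1 for some integers q and k with 1 ≤ q < p and k ≥ 0. -/
/-!
By Lucas' theorem, `p ∣ n.choose k` iff some base-`p` digit of `k` exceeds the corresponding digit
of `n`. If `n ≥ p` and the last digit `r` of `n` is not `p - 1`, then `k = r + 1 ≤ n` has a last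
digit larger than `r`, so row `n` has an entry divisible by `p`. If the last digit is `p - 1`, it
imposes no condition on `k` and can be removed, which replaces `n + 1` by `(n + 1) / p`.
-/

section PascalRow

variable {p n k : ℕ}

theorem prime_dvd_choose_iff_lt_of_lt (hp : p.Prime) (hn : n < p) : p ∣ n.choose k ↔ n < k := by
  refine ⟨fun hdvd ↦ ?_, fun hlt ↦ by simp [Nat.choose_eq_zero_of_lt hlt]⟩
  by_contra! hle
  exact hp.coprime_iff_not_dvd.1 (hp.coprime_choose_of_lt hn hle) hdvd

theorem prime_dvd_choose_iff_mod_lt_or_dvd_choose_div (hp : p.Prime) :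
    p ∣ n.choose k ↔ n % p < k % p ∨ p ∣ (n / p).choose (k / p) := by
  have : Fact p.Prime := ⟨hp⟩
  rw [Choose.choose_modEq_choose_mod_mul_choose_div_nat.dvd_iff dvd_rfl, hp.dvd_mul,
    prime_dvd_choose_iff_lt_of_lt hp (Nat.mod_lt n hp.pos)]

theorem add_one_lt_or_dvd_add_one_of_forall_not_dvd_choose (hp : p.Prime)
    (hrow : ∀ k ≤ n, ¬ p ∣ n.choose k) : n + 1 < p ∨ p ∣ n + 1 := by
  by_contra! ⟨hle, hndvd⟩
  have hpn : p ≤ n := Nat.le_of_lt_succ (hle.lt_of_ne fun h ↦ hndvd h.dvd)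
  have hne : n % p + 1 ≠ p := fun h ↦
    hndvd (Nat.dvd_of_mod_eq_zero (by rw [← Nat.mod_add_mod, h, Nat.mod_self]))
  have hmod : (n % p + 1) % p = n % p + 1 :=
    Nat.mod_eq_of_lt ((Nat.succ_le_of_lt (Nat.mod_lt n hp.pos)).lt_of_ne hne)
  have hk : n % p + 1 ≤ n := (Nat.mod_lt n hp.pos).trans_le hpn
  refine hrow _ hk ((prime_dvd_choose_iff_mod_lt_or_dvd_choose_div hp).2 (Or.inl ?_))
  rw [hmod]
  exact Nat.lt_add_one _

theorem prime_dvd_choose_iff_dvd_choose_div_of_add_one_eq_mul {m : ℕ} (hp : p.Prime)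
    (hnm : n + 1 = p * (m + 1)) :
    p ∣ n.choose k ↔ p ∣ m.choose (k / p) := by
  have hn : n = (p - 1) + p * m := by
    rw [mul_add_one] at hnm
    have := hp.pos
    lia
  have hlt : p - 1 < p := Nat.sub_one_lt hp.ne_zero
  have hdiv : n / p = m := by
    rw [hn, Nat.add_mul_div_left _ _ hp.pos, Nat.div_eq_of_lt hlt, zero_add]
  have hmod : n % p = p - 1 := by
    rw [hn, Nat.add_mul_mod_self_left, Nat.mod_eq_of_lt hlt]
  rw [prime_dvd_choose_iff_mod_lt_or_dvd_choose_div hp, hdiv, hmod]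
  exact or_iff_right (Nat.le_sub_one_of_lt (Nat.mod_lt k hp.pos)).not_gt

theorem forall_not_dvd_choose_iff_of_add_one_eq_mul {m : ℕ} (hp : p.Prime)
    (hnm : n + 1 = p * (m + 1)) :
    (∀ k ≤ n, ¬ p ∣ n.choose k) ↔ ∀ k ≤ m, ¬ p ∣ m.choose k := by
  have le_iff (k : ℕ) : k ≤ n ↔ k / p ≤ m := by
    rw [← Nat.lt_add_one_iff, ← Nat.lt_add_one_iff, Nat.div_lt_iff_lt_mul hp.pos, mul_comm, ← hnm]
  simp only [prime_dvd_choose_iff_dvd_choose_div_of_add_one_eq_mul hp hnm, le_iff]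
  refine ⟨fun hrow k hk ↦ ?_, fun hrow k hk ↦ hrow _ hk⟩
  simpa only [Nat.mul_div_cancel_left k hp.pos] using
    hrow (p * k) (by rwa [Nat.mul_div_cancel_left k hp.pos])

theorem exists_add_one_eq_mul_pow_of_forall_not_dvd_choose (hp : p.Prime)
    (hrow : ∀ k ≤ n, ¬ p ∣ n.choose k) :
    ∃ q k : ℕ, 1 ≤ q ∧ q < p ∧ n + 1 = q * p ^ k := by
  induction n using Nat.strong_induction_on with
  | _ n ih =>
    obtain hlt | ⟨m', hm'⟩ := add_one_lt_or_dvd_add_one_of_forall_not_dvd_choose hp hrow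
    · exact ⟨n + 1, 0, n.succ_pos, hlt, by rw [pow_zero, mul_one]⟩
    · obtain ⟨m, rfl⟩ : ∃ m, m' = m + 1 :=
        Nat.exists_eq_succ_of_ne_zero (by rintro rfl; simp at hm')
      have hmn : m < n := by
        rw [← Nat.add_lt_add_iff_right, hm']
        exact lt_mul_of_one_lt_left m.succ_pos hp.one_lt
      obtain ⟨q, k, hq, hqp, hm⟩ :=
        ih m hmn ((forall_not_dvd_choose_iff_of_add_one_eq_mul hp hm').1 hrow)
      exact ⟨q, k + 1, hq, hqp, by rw [hm', hm]; ring⟩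

theorem forall_not_dvd_choose_of_add_one_eq_mul_pow {q : ℕ} (hp : p.Prime) (hqp : q < p)
    (hn : n + 1 = q * p ^ k) : ∀ j ≤ n, ¬ p ∣ n.choose j := by
  induction k generalizing n with
  | zero =>
    have hnp : n < p := by rw [pow_zero, mul_one] at hn; lia
    exact fun j hj ↦ (prime_dvd_choose_iff_lt_of_lt hp hnp).not.2 hj.not_gt
  | succ k ih =>
    have hne : q * p ^ k ≠ 0 := by
      intro h
      simp [pow_succ, ← mul_assoc, h] at hn
    obtain ⟨m, hm⟩ : ∃ m, q * p ^ k = m + 1 := Nat.exists_eq_succ_of_ne_zero hne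
    have hnm : n + 1 = p * (m + 1) := by rw [hn, ← hm]; ring
    exact (forall_not_dvd_choose_iff_of_add_one_eq_mul hp hnm).2 (ih hm.symm)

end PascalRow

/-- For a prime `p`, every entry of the `n`-th row of Pascal's triangle is nonzero
modulo `p` iff `n = q ⬝ p^k - 1` for some `1 ≤ q < p` and `k ≥ 0`. -/
theorem pascal_row_nonzero_mod_p_iff (p : ℕ) (hp : p.Prime) (n : ℕ) :
    (∀ k ≤ n, ¬ p ∣ n.choose k) ↔ ∃ q k : ℕ, 1 ≤ q ∧ q < p ∧ n + 1 = q * p ^ k :=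
  ⟨exists_add_one_eq_mul_pow_of_forall_not_dvd_choose hp,
    fun ⟨_, _, _, hqp, hn⟩ ↦ forall_not_dvd_choose_of_add_one_eq_mul_pow hp hqp hn⟩
end
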